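/- Let p be a prime and let C' = {(t,n) ∈ ℝ×ℤ : n ≤ 0 and t + n·log p ≥ 0}. A real number u ≠ 0 satisfies liminf_{q→∞} q·|q|_p·⟨qu⟩ = 0 (the liminf taken over positive integers q) if and only if the orbit α^{C'} x_{u,0} = {α^{(t,n)} x_{u,0} : (t,n) ∈ C'} does not have compact closure in X. -/

import Mathlib

open Matrix MatrixGroups

/-- Topology on the special linear group, induced from the space of matrices. -/
instance Matrix.SpecialLinearGroup.topologicalSpace {n : Type*} [DecidableEq n] [Fintype n]
    {R : Type*} [CommRing R] [TopologicalSpace R] :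
    TopologicalSpace (Matrix.SpecialLinearGroup n R) :=
  TopologicalSpace.induced (fun A => (A : Matrix n n R)) inferInstance

/-- The ring `ℤ[1/p]`, realized as the localization of `ℤ` away from `p`. -/
abbrev ZInvP (p : ℕ) : Type := Localization.Away (p : ℤ)

/-- The canonical ring homomorphism `ℤ[1/p] → ℝ`. -/
noncomputable def zInvPToR (p : ℕ) [Fact p.Prime] : ZInvP p →+* ℝ :=
  Localization.awayLift (Int.castRingHom ℝ) (p : ℤ) (by
    have hp : ((p : ℤ) : ℝ) ≠ 0 := by
      exact_mod_cast Int.natCast_ne_zero.mpr (Fact.out : p.Prime).ne_zero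
    simpa [isUnit_iff_ne_zero] using hp)

/-- The canonical ring homomorphism `ℤ[1/p] → ℚ_p`. -/
noncomputable def zInvPToQp (p : ℕ) [Fact p.Prime] : ZInvP p →+* ℚ_[p] :=
  Localization.awayLift (Int.castRingHom ℚ_[p]) (p : ℤ) (by
    have hp : ((p : ℤ) : ℚ_[p]) ≠ 0 := by
      exact_mod_cast Int.natCast_ne_zero.mpr (Fact.out : p.Prime).ne_zero
    simpa [isUnit_iff_ne_zero] using hp)

/-- The group `G = SL(2,ℝ) × SL(2,ℚ_p)`. -/
abbrev GP (p : ℕ) [Fact p.Prime] : Type := SL(2, ℝ) × SL(2, ℚ_[p])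

/-- The diagonal embedding `ι : SL(2,ℤ[1/p]) → G`, `ι(A) = (A, A)`. -/
noncomputable def iotaP (p : ℕ) [Fact p.Prime] : SL(2, ZInvP p) →* GP p :=
  (Matrix.SpecialLinearGroup.map (zInvPToR p)).prod
    (Matrix.SpecialLinearGroup.map (zInvPToQp p))

/-- The lattice `Γ = ι(SL(2,ℤ[1/p]))` as a subgroup of `G`. -/
noncomputable def GammaP (p : ℕ) [Fact p.Prime] : Subgroup (GP p) := (iotaP p).range

/-- The homogeneous space `X = G/Γ` (with the quotient topology). -/
abbrev XP (p : ℕ) [Fact p.Prime] : Type := GP p ⧸ GammaP p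

/-- The element `α^(t,n) = (diag(e^{-t}, e^t), diag(pⁿ, p^{-n}))` of `G`; it acts on `X`
by left multiplication. -/
noncomputable def adiagP (p : ℕ) [Fact p.Prime] (t : ℝ) (n : ℤ) : GP p :=
  (⟨!![Real.exp (-t), 0; 0, Real.exp t], by
      simp [Matrix.det_fin_two_of, ← Real.exp_add]⟩,
   ⟨!![(p : ℚ_[p]) ^ n, 0; 0, (p : ℚ_[p]) ^ (-n)], by
      have hp : (p : ℚ_[p]) ≠ 0 := Nat.cast_ne_zero.mpr (Fact.out : p.Prime).ne_zero
      simp [Matrix.det_fin_two_of, _root_.zpow_neg,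
        mul_inv_cancel₀ (zpow_ne_zero n hp)]⟩)

/-- The point `x_{u,v} = ([[1,0],[u,1]], [[1,0],[v,1]])Γ ∈ X`. -/
noncomputable def xuvP (p : ℕ) [Fact p.Prime] (u : ℝ) (v : ℚ_[p]) : XP p :=
  QuotientGroup.mk
    ((⟨!![1, 0; u, 1], by simp [Matrix.det_fin_two_of]⟩,
      ⟨!![1, 0; v, 1], by simp [Matrix.det_fin_two_of]⟩) : GP p)

/-- `nearestIntDist z` is the distance from `z` to the nearest integer, denoted ⟨z⟩. -/
noncomputable def nearestIntDist (z : ℝ) : ℝ := ⨅ k : ℤ, |z - (k : ℝ)|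

/-- The orbit `α^{C'} x` of `x` under the cone `C' = {(t,n) : n ≤ 0, t + n·log p ≥ 0}`. -/
noncomputable def coneOrbitP' (p : ℕ) [Fact p.Prime] (x : XP p) : Set (XP p) :=
  {y | ∃ (t : ℝ) (n : ℤ), n ≤ 0 ∧ 0 ≤ t + (n : ℝ) * Real.log p ∧ y = adiagP p t n • x}

/-! ### Topology of the special linear group -/

namespace Matrix.SpecialLinearGroup

theorem continuous_coe {n R : Type*} [DecidableEq n] [Fintype n] [CommRing R]
    [TopologicalSpace R] : Continuous (fun A : SpecialLinearGroup n R => (A : Matrix n n R)) :=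
  continuous_induced_dom

instance continuousMul {n R : Type*} [DecidableEq n] [Fintype n] [CommRing R]
    [TopologicalSpace R] [IsTopologicalRing R] : ContinuousMul (SpecialLinearGroup n R) where
  continuous_mul := by
    refine continuous_induced_rng.2 ?_
    have h : Continuous fun x : SpecialLinearGroup n R × SpecialLinearGroup n R =>
        (x.1 : Matrix n n R) * (x.2 : Matrix n n R) :=
      (continuous_coe.comp continuous_fst).matrix_mul (continuous_coe.comp continuous_snd)
    exact h

theorem continuous_entry {n R : Type*} [DecidableEq n] [Fintype n] [CommRing R]
    [TopologicalSpace R] (i j : n) :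
    Continuous (fun A : SpecialLinearGroup n R => (A : Matrix n n R) i j) :=
  continuous_coe.matrix_elem i j

theorem isClosedEmbedding_coe {n R : Type*} [DecidableEq n] [Fintype n] [CommRing R]
    [TopologicalSpace R] [IsTopologicalRing R] [T1Space R] :
    Topology.IsClosedEmbedding (fun A : SpecialLinearGroup n R => (A : Matrix n n R)) where
  eq_induced := rfl
  injective := Subtype.coe_injective
  isClosed_range := by
    have h : Set.range (fun A : SpecialLinearGroup n R => (A : Matrix n n R)) =
        Matrix.det ⁻¹' {1} := by
      ext M
      exact ⟨by rintro ⟨A, rfl⟩; exact A.2, fun hM => ⟨⟨M, hM⟩, rfl⟩⟩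
    rw [h]
    exact isClosed_singleton.preimage (continuous_id.matrix_det)

/-- The matrices of determinant one with all entries of norm at most `r` form a compact set. -/
theorem isCompact_norm_entry_le {n K : Type*} [DecidableEq n] [Fintype n] [NormedField K]
    [ProperSpace K] (r : ℝ) :
    IsCompact {A : SpecialLinearGroup n K | ∀ i j, ‖(A : Matrix n n K) i j‖ ≤ r} := by
  have h : IsCompact {M : Matrix n n K | ∀ i j, ‖M i j‖ ≤ r} := by
    have := isCompact_univ_pi (X := fun _ : n => n → K)
      (s := fun _ => Set.univ.pi fun _ => Metric.closedBall (0 : K) r)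
      fun _ => isCompact_univ_pi fun _ => isCompact_closedBall (0 : K) r
    have hs : {M : Matrix n n K | ∀ i j, ‖M i j‖ ≤ r} =
        Set.univ.pi fun _ => Set.univ.pi fun _ => Metric.closedBall (0 : K) r := by
      ext M
      exact ⟨fun h i _ j _ => by simpa using h i j,
        fun h i j => by simpa using h i trivial j trivial⟩
    rw [hs]
    exact this
  exact isClosedEmbedding_coe.isCompact_preimage h

theorem isOpen_norm_entry_lt {n K : Type*} [DecidableEq n] [Fintype n] [NormedField K] (r : ℝ) :
    IsOpen {A : SpecialLinearGroup n K | ∀ i j, ‖(A : Matrix n n K) i j‖ < r} := by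
  simp only [Set.ofPred_forall]
  exact isOpen_iInter_of_finite fun i => isOpen_iInter_of_finite fun j =>
    isOpen_lt (continuous_entry i j).norm continuous_const

theorem norm_inv_entry_le {K : Type*} [NormedField K] {r : ℝ} {A : SL(2, K)}
    (hA : ∀ i j, ‖(A : Matrix (Fin 2) (Fin 2) K) i j‖ ≤ r) (i j : Fin 2) :
    ‖((A⁻¹ : SL(2, K)) : Matrix (Fin 2) (Fin 2) K) i j‖ ≤ r := by
  rw [SL2_inv_expl]
  fin_cases i <;> fin_cases j <;> simp [hA]

theorem norm_mul_entry_le {K : Type*} [NormedField K] {r s : ℝ} {A B : SL(2, K)}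
    (hA : ∀ i j, ‖(A : Matrix (Fin 2) (Fin 2) K) i j‖ ≤ r)
    (hB : ∀ i j, ‖(B : Matrix (Fin 2) (Fin 2) K) i j‖ ≤ s) (i j : Fin 2) :
    ‖((A * B : SL(2, K)) : Matrix (Fin 2) (Fin 2) K) i j‖ ≤ 2 * (r * s) := by
  have hr : 0 ≤ r := (norm_nonneg _).trans (hA 0 0)
  have h : ∀ k, ‖(A : Matrix (Fin 2) (Fin 2) K) i k * (B : Matrix (Fin 2) (Fin 2) K) k j‖
      ≤ r * s := fun k => by
    rw [norm_mul]
    exact mul_le_mul (hA i k) (hB k j) (norm_nonneg _) hr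
  rw [coe_mul, Matrix.mul_apply, Fin.sum_univ_two]
  linarith [norm_add_le ((A : Matrix (Fin 2) (Fin 2) K) i 0 * (B : Matrix (Fin 2) (Fin 2) K) 0 j)
    ((A : Matrix (Fin 2) (Fin 2) K) i 1 * (B : Matrix (Fin 2) (Fin 2) K) 1 j), h 0, h 1]

end Matrix.SpecialLinearGroup

section Boxes

variable (p : ℕ) [Fact p.Prime]

/-- The elements of `G` with all entries of both components of norm at most `r`. -/
def closedBox (r : ℝ) : Set (GP p) :=
  {A : SL(2, ℝ) | ∀ i j, ‖(A : Matrix (Fin 2) (Fin 2) ℝ) i j‖ ≤ r} ×ˢ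
    {A : SL(2, ℚ_[p]) | ∀ i j, ‖(A : Matrix (Fin 2) (Fin 2) ℚ_[p]) i j‖ ≤ r}

/-- The elements of `G` with all entries of both components of norm less than `r`. -/
def openBox (r : ℝ) : Set (GP p) :=
  {A : SL(2, ℝ) | ∀ i j, ‖(A : Matrix (Fin 2) (Fin 2) ℝ) i j‖ < r} ×ˢ
    {A : SL(2, ℚ_[p]) | ∀ i j, ‖(A : Matrix (Fin 2) (Fin 2) ℚ_[p]) i j‖ < r}

theorem isCompact_closedBox (r : ℝ) : IsCompact (closedBox p r) :=
  (SpecialLinearGroup.isCompact_norm_entry_le r).prod (SpecialLinearGroup.isCompact_norm_entry_le r)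

theorem isOpen_openBox (r : ℝ) : IsOpen (openBox p r) :=
  (SpecialLinearGroup.isOpen_norm_entry_lt r).prod (SpecialLinearGroup.isOpen_norm_entry_lt r)

theorem openBox_mono {r s : ℝ} (h : r ≤ s) : openBox p r ⊆ openBox p s :=
  fun _ hg => ⟨fun i j => (hg.1 i j).trans_le h, fun i j => (hg.2 i j).trans_le h⟩

theorem openBox_subset_closedBox (r : ℝ) : openBox p r ⊆ closedBox p r :=
  fun _ hg => ⟨fun i j => (hg.1 i j).le, fun i j => (hg.2 i j).le⟩

theorem one_mem_openBox_two : (1 : GP p) ∈ openBox p 2 := by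
  refine ⟨fun i j => ?_, fun i j => ?_⟩ <;> fin_cases i <;> fin_cases j <;> norm_num

variable {p}

theorem inv_mem_closedBox {r : ℝ} {g : GP p} (hg : g ∈ closedBox p r) : g⁻¹ ∈ closedBox p r :=
  ⟨SpecialLinearGroup.norm_inv_entry_le hg.1, SpecialLinearGroup.norm_inv_entry_le hg.2⟩

theorem mul_mem_closedBox {r s : ℝ} {g h : GP p} (hg : g ∈ closedBox p r)
    (hh : h ∈ closedBox p s) : g * h ∈ closedBox p (2 * (r * s)) :=
  ⟨SpecialLinearGroup.norm_mul_entry_le hg.1 hh.1, SpecialLinearGroup.norm_mul_entry_le hg.2 hh.2⟩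

theorem exists_nat_mem_openBox (g : GP p) : ∃ N : ℕ, g ∈ openBox p (N + 1) := by
  obtain ⟨N, hN⟩ := exists_nat_ge (∑ i, ∑ j, ‖(g.1 : Matrix (Fin 2) (Fin 2) ℝ) i j‖ +
    ∑ i, ∑ j, ‖(g.2 : Matrix (Fin 2) (Fin 2) ℚ_[p]) i j‖)
  simp only [Fin.sum_univ_two] at hN
  have h₁ : ∀ i j, 0 ≤ ‖(g.1 : Matrix (Fin 2) (Fin 2) ℝ) i j‖ := fun _ _ => norm_nonneg _
  have h₂ : ∀ i j, 0 ≤ ‖(g.2 : Matrix (Fin 2) (Fin 2) ℚ_[p]) i j‖ := fun _ _ => norm_nonneg _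
  refine ⟨N, fun i j => ?_, fun i j => ?_⟩ <;> fin_cases i <;> fin_cases j <;>
    simp only [Fin.zero_eta, Fin.mk_one] <;>
    linarith [h₁ 0 0, h₁ 0 1, h₁ 1 0, h₁ 1 1, h₂ 0 0, h₂ 0 1, h₂ 1 0, h₂ 1 1]

/-- A subset of `X` has compact closure iff it is covered by the image of a box. -/
theorem isCompact_closure_iff_exists_box (S : Set (XP p)) :
    IsCompact (closure S) ↔
      ∃ N : ℕ, ∀ y ∈ S, ∃ g ∈ closedBox p (N + 1), (QuotientGroup.mk g : XP p) = y := by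
  constructor
  · intro hS
    obtain ⟨N, hN⟩ := hS.elim_directed_cover
      (fun N : ℕ => (QuotientGroup.mk : GP p → XP p) '' openBox p (N + 1))
      (fun N => QuotientGroup.isOpenMap_coe _ (isOpen_openBox p _))
      (fun y _ => by
        obtain ⟨g, rfl⟩ := QuotientGroup.mk_surjective y
        obtain ⟨N, hN⟩ := exists_nat_mem_openBox g
        exact Set.mem_iUnion.2 ⟨N, g, hN, rfl⟩)
      (directed_of_isDirected_le fun i j hij => Set.image_mono
        (openBox_mono p (by have : (i : ℝ) ≤ j := Nat.cast_le.2 hij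
                            linarith)))
    refine ⟨N, fun y hy => ?_⟩
    obtain ⟨g, hg, rfl⟩ := hN (subset_closure hy)
    exact ⟨g, openBox_subset_closedBox p _ hg, rfl⟩
  · rintro ⟨N, hN⟩
    refine ((isCompact_closedBox p (2 * (2 * (N + 1)))).image
      QuotientGroup.continuous_mk).of_isClosed_subset isClosed_closure fun y hy => ?_
    obtain ⟨x, rfl⟩ := QuotientGroup.mk_surjective y
    have hopen : IsOpen ((QuotientGroup.mk : GP p → XP p) '' ((· * x) '' openBox p 2)) :=
      QuotientGroup.isOpenMap_coe _ ((Homeomorph.mulRight x).isOpenMap _ (isOpen_openBox p 2))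
    obtain ⟨_, ⟨_, ⟨w, hw, rfl⟩, rfl⟩, hz⟩ := mem_closure_iff.1 hy _ hopen
      ⟨_, ⟨1, one_mem_openBox_two p, rfl⟩, by simp⟩
    obtain ⟨l, hl, hlw⟩ := hN _ hz
    refine ⟨w⁻¹ * l, mul_mem_closedBox (inv_mem_closedBox (openBox_subset_closedBox p _ hw)) hl,
      ?_⟩
    rw [QuotientGroup.eq] at hlw ⊢
    simpa [mul_assoc] using hlw

end Boxes

/-! ### Arithmetic of `ℤ[1/p]` and the orbit -/

section Orbit

variable {p : ℕ} [Fact p.Prime]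

@[simp]
theorem zInvPToR_algebraMap (k : ℤ) : zInvPToR p (algebraMap ℤ (ZInvP p) k) = k := by
  simp [zInvPToR]

@[simp]
theorem zInvPToQp_algebraMap (k : ℤ) : zInvPToQp p (algebraMap ℤ (ZInvP p) k) = k := by
  simp [zInvPToQp]

/-- The inverse of `p` in `ℤ[1/p]`. -/
noncomputable def zInvPInv (p : ℕ) : ZInvP p := IsLocalization.Away.invSelf (p : ℤ)

theorem natCast_mul_zInvPInv (p : ℕ) : (p : ZInvP p) * zInvPInv p = 1 := by
  simpa [zInvPInv] using IsLocalization.Away.mul_invSelf (S := ZInvP p) (p : ℤ)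

@[simp]
theorem zInvPToR_inv : zInvPToR p (zInvPInv p) = (p : ℝ)⁻¹ := by
  have h := congrArg (zInvPToR p) (natCast_mul_zInvPInv p)
  rw [map_mul, map_natCast, map_one] at h
  exact eq_inv_of_mul_eq_one_right h

@[simp]
theorem zInvPToQp_inv : zInvPToQp p (zInvPInv p) = (p : ℚ_[p])⁻¹ := by
  have h := congrArg (zInvPToQp p) (natCast_mul_zInvPInv p)
  rw [map_mul, map_natCast, map_one] at h
  exact eq_inv_of_mul_eq_one_right h

theorem one_le_abs_mul_norm_intCast {k : ℤ} (hk : k ≠ 0) :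
    1 ≤ |(k : ℝ)| * ‖(k : ℚ_[p])‖ := by
  have hp : 0 < (p : ℝ) := Nat.cast_pos.2 (Fact.out : p.Prime).pos
  have hk' : (k : ℚ_[p]) ≠ 0 := Int.cast_ne_zero.2 hk
  have hv : ((k : ℚ_[p]).valuation) = (padicValInt p k : ℤ) := by simp
  have hdvd : (p : ℤ) ^ padicValInt p k ∣ k := padicValInt_dvd k
  have hle : (p : ℝ) ^ padicValInt p k ≤ |(k : ℝ)| := by
    have := Int.le_of_dvd (abs_pos.2 hk) ((dvd_abs _ _).2 hdvd)
    exact_mod_cast this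
  rw [Padic.norm_eq_zpow_neg_valuation hk', hv, _root_.zpow_neg, zpow_natCast,
    ← div_eq_mul_inv, one_le_div (by positivity)]
  exact hle

/-- The product formula lower bound for nonzero elements of `ℤ[1/p]`. -/
theorem one_le_abs_mul_norm {z : ZInvP p} (hz : z ≠ 0) :
    1 ≤ |zInvPToR p z| * ‖zInvPToQp p z‖ := by
  obtain ⟨n, k, hk⟩ := IsLocalization.Away.surj (p : ℤ) z
  have hp : 0 < (p : ℝ) := Nat.cast_pos.2 (Fact.out : p.Prime).pos
  have hk0 : k ≠ 0 := by
    rintro rfl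
    rw [map_zero] at hk
    exact hz (((IsLocalization.Away.algebraMap_pow_isUnit (p : ℤ) n).mul_left_eq_zero).1 hk)
  have hR := congrArg (zInvPToR p) hk
  have hQ := congrArg (zInvPToQp p) hk
  simp only [map_mul, map_pow, zInvPToR_algebraMap, Int.cast_natCast] at hR
  simp only [map_mul, map_pow, zInvPToQp_algebraMap, Int.cast_natCast] at hQ
  have h := one_le_abs_mul_norm_intCast (p := p) hk0
  rw [← hR, ← hQ, abs_mul, norm_mul, Padic.norm_p_pow, abs_of_pos (pow_pos hp n),
    _root_.zpow_neg, zpow_natCast] at h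
  calc (1 : ℝ) ≤ _ := h
    _ = _ := by field_simp

/-- The matrix `[[s⁻¹, 0], [sU, s]]`. -/
noncomputable def shearScale (s U : ℝ) (hs : s ≠ 0) : SL(2, ℝ) :=
  ⟨!![s⁻¹, 0; s * U, s], by simp [Matrix.det_fin_two_of, hs]⟩

/-- The matrix `diag(p^m, p^{-m})` over `ℤ[1/p]`. -/
noncomputable def zInvPDiag (p m : ℕ) : SL(2, ZInvP p) :=
  ⟨!![(p : ZInvP p) ^ m, 0; 0, zInvPInv p ^ m], by
    rw [Matrix.det_fin_two_of, ← mul_pow, natCast_mul_zInvPInv, one_pow, mul_zero, sub_zero]⟩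

theorem mk_shearScale_eq_smul (u s : ℝ) (hs : 0 < s) (m : ℕ) :
    (QuotientGroup.mk (shearScale s (p ^ (2 * m) * u) hs.ne', 1) : XP p) =
      adiagP p (Real.log s + m * Real.log p) (-m) • xuvP p u 0 := by
  have hp : 0 < (p : ℝ) := Nat.cast_pos.2 (Fact.out : p.Prime).pos
  have hp' : (p : ℚ_[p]) ≠ 0 := Nat.cast_ne_zero.2 (Fact.out : p.Prime).ne_zero
  have hexp : Real.exp (Real.log s + m * Real.log p) = s * p ^ m := by
    rw [Real.exp_add, Real.exp_log hs, Real.exp_nat_mul, Real.exp_log hp]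
  symm
  refine QuotientGroup.eq.2 ⟨zInvPDiag p m, eq_inv_mul_iff_mul_eq.2 ?_⟩
  refine Prod.ext (Subtype.ext ?_) (Subtype.ext ?_)
  · change !![Real.exp (-(Real.log s + m * Real.log p)), 0;
        0, Real.exp (Real.log s + m * Real.log p)] * !![1, 0; u, 1] *
        (!![(p : ZInvP p) ^ m, 0; 0, zInvPInv p ^ m]).map (zInvPToR p) =
      !![s⁻¹, 0; s * (p ^ (2 * m) * u), s]
    rw [Real.exp_neg, hexp, pow_mul']
    ext i j
    fin_cases i <;> fin_cases j <;> simp [Matrix.mul_apply, Fin.sum_univ_two] <;> field_simp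
  · change !![(p : ℚ_[p]) ^ (-m : ℤ), 0; 0, (p : ℚ_[p]) ^ (-(-m) : ℤ)] * !![1, 0; 0, 1] *
        (!![(p : ZInvP p) ^ m, 0; 0, zInvPInv p ^ m]).map (zInvPToQp p) = 1
    ext i j
    fin_cases i <;> fin_cases j <;> simp [Matrix.mul_apply, Fin.sum_univ_two, hp']

theorem mem_coneOrbitP'_iff (u : ℝ) (y : XP p) :
    y ∈ coneOrbitP' p (xuvP p u 0) ↔ ∃ (s : ℝ) (hs : 1 ≤ s) (m : ℕ),
      QuotientGroup.mk (shearScale s (p ^ (2 * m) * u) (by positivity), 1) = y := by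
  constructor
  · rintro ⟨t, n, hn, ht, rfl⟩
    obtain ⟨m, rfl⟩ : ∃ m : ℕ, n = -m := ⟨n.natAbs, by omega⟩
    push_cast at ht
    refine ⟨Real.exp (t - m * Real.log p), Real.one_le_exp (by linarith), m, ?_⟩
    rw [mk_shearScale_eq_smul u _ (Real.exp_pos _) m, Real.log_exp, sub_add_cancel]
  · rintro ⟨s, hs, m, rfl⟩
    refine ⟨Real.log s + m * Real.log p, -m, by simp, ?_, mk_shearScale_eq_smul u s (by linarith) m⟩
    have := Real.log_nonneg hs
    push_cast
    linarith

end Orbit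

/-! ### The Diophantine condition -/

section Diophantine

/-- `u` is bounded away from the rationals in the sense that `a‖p^{2m}ua‖` is bounded below
uniformly in `a ≥ 1` and `m ≥ 0`. -/
def UniformlyBadlyApproximable (p : ℕ) (u : ℝ) : Prop :=
  ∃ c : ℝ, 0 < c ∧ ∀ (m a : ℕ) (b : ℤ), 0 < a → c ≤ a * |(p : ℝ) ^ (2 * m) * u * a + b|

/-- If no multiple `aU` is too close to an integer, then `[[s⁻¹, 0], [sU, s]]` can be moved by
`SL(2,ℤ)` into a bounded set. -/
theorem exists_int_matrix_bounded {U c s : ℝ} (hc : 0 < c) (hs : 1 ≤ s)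
    (hU : ∀ (a : ℕ) (b : ℤ), 0 < a → c ≤ a * |U * a + b|) :
    ∃ a b a' b' : ℤ, a * b' - a' * b = 1 ∧ |s⁻¹ * a| ≤ 1 ∧ |s⁻¹ * a'| ≤ 1 ∧
      |s * (U * a + b)| ≤ 1 ∧ |s * (U * a' + b')| ≤ 2 / c := by
  have hs0 : 0 < s := by linarith
  obtain ⟨k, hk0, hkn, hk⟩ := Real.exists_nat_abs_mul_sub_round_le U (Nat.floor_pos.2 hs)
  have hks : (k : ℝ) ≤ s := (Nat.cast_le.2 hkn).trans (Nat.floor_le hs0.le)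
  have hkd : s * |U * k - round (k * U)| ≤ 1 := by
    have h1 : s < (⌊s⌋₊ : ℝ) + 1 := Nat.lt_floor_add_one s
    rw [mul_comm U]
    calc s * |k * U - round (k * U)| ≤ s * (1 / ((⌊s⌋₊ : ℝ) + 1)) := by gcongr
      _ ≤ 1 := by rw [mul_one_div, div_le_one (by positivity)]; exact h1.le
  set j : ℤ := -round (k * U) with hj
  have hkd' : s * |U * k + j| ≤ 1 := by
    rw [hj]; push_cast; exact hkd
  -- divide by the greatest common divisor
  have hk0' : (k : ℤ) ≠ 0 := by exact_mod_cast hk0.ne'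
  obtain ⟨d, a, b, hd, hab, hka, hjb⟩ : ∃ d a b : ℤ, 0 < d ∧ IsCoprime a b ∧
      (k : ℤ) = a * d ∧ j = b * d := by
    obtain ⟨a, b, hab, h1, h2⟩ := Int.exists_gcd_one (m := k) (n := j)
      (Int.gcd_pos_of_ne_zero_left _ hk0')
    exact ⟨Int.gcd k j, a, b, by exact_mod_cast Int.gcd_pos_of_ne_zero_left _ hk0',
      Int.isCoprime_iff_gcd_eq_one.2 hab, h1, h2⟩
  have hd1 : (1 : ℝ) ≤ d := by exact_mod_cast hd
  have ha : 0 < a := by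
    have : (0 : ℤ) < a * d := by rw [← hka]; exact_mod_cast hk0
    exact (pos_iff_pos_of_mul_pos this).2 hd
  have haR : (0 : ℝ) < a := by exact_mod_cast ha
  have hkaR : (k : ℝ) = a * d := by exact_mod_cast hka
  have hjbR : (j : ℝ) = b * d := by exact_mod_cast hjb
  have has : (a : ℝ) ≤ s := by nlinarith
  have hdist : s * |U * a + b| ≤ 1 := by
    rw [hkaR, hjbR, show U * (a * d) + b * d = (U * a + b) * d by ring, abs_mul,
      abs_of_pos (by linarith : (0 : ℝ) < d)] at hkd'
    have : 0 ≤ s * |U * a + b| := by positivity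
    nlinarith
  have hca : c * s ≤ a := by
    have h := hU a.toNat b (by omega)
    have hcast : ((a.toNat : ℕ) : ℝ) = a := by exact_mod_cast Int.toNat_of_nonneg ha.le
    rw [hcast] at h
    calc c * s ≤ a * |U * a + b| * s := by gcongr
      _ = a * (s * |U * a + b|) := by ring
      _ ≤ a := mul_le_of_le_one_right haR.le hdist
  -- complete to a basis and reduce the second vector modulo the first
  obtain ⟨y, x, hxy⟩ := hab
  set a' := (-x) % a with ha'
  set b' := y - (-x) / a * b with hb'
  have hdet : a * b' - a' * b = 1 := by
    have := Int.emod_add_mul_ediv (-x) a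
    rw [hb']
    linear_combination hxy - b * this
  have ha'0 : (0 : ℝ) ≤ a' := by exact_mod_cast Int.emod_nonneg _ ha.ne'
  have ha'a : (a' : ℝ) ≤ a := by exact_mod_cast (Int.emod_lt_of_pos _ ha).le
  have hdetR : (a : ℝ) * b' - a' * b = 1 := by exact_mod_cast hdet
  refine ⟨a, b, a', b', hdet, ?_, ?_, ?_, ?_⟩
  · rw [abs_of_nonneg (by positivity), inv_mul_le_one₀ hs0]; exact has
  · rw [abs_of_nonneg (by positivity), inv_mul_le_one₀ hs0]; exact ha'a.trans has
  · rwa [abs_mul, abs_of_pos hs0]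
  · have hkey : (a : ℝ) * (s * (U * a' + b')) = s + a' * (s * (U * a + b)) := by
      linear_combination s * hdetR
    have h1 : |(a : ℝ) * (s * (U * a' + b'))| ≤ 2 * s := by
      rw [hkey]
      calc |s + a' * (s * (U * a + b))| ≤ |s| + |a' * (s * (U * a + b))| := abs_add_le _ _
        _ = s + a' * (s * |U * a + b|) := by
          rw [abs_mul, abs_mul, abs_of_pos hs0, abs_of_nonneg ha'0]
        _ ≤ s + a' * 1 := by gcongr
        _ ≤ 2 * s := by linarith
    rw [abs_mul, abs_of_pos haR] at h1
    rw [le_div_iff₀ hc]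
    have h2 : 0 ≤ |s * (U * a' + b')| := abs_nonneg _
    have h3 : (|s * (U * a' + b')| * c) * s ≤ 2 * s := by nlinarith
    exact le_of_mul_le_mul_right h3 hs0

theorem nearestIntDist_le (z : ℝ) (k : ℤ) : nearestIntDist z ≤ |z - k| :=
  ciInf_le ⟨0, by rintro _ ⟨k, rfl⟩; exact abs_nonneg _⟩ k

theorem nearestIntDist_nonneg (z : ℝ) : 0 ≤ nearestIntDist z :=
  le_ciInf fun _ => abs_nonneg _

theorem nearestIntDist_eq_abs_sub_round (z : ℝ) : nearestIntDist z = |z - round z| :=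
  le_antisymm (nearestIntDist_le z _) (le_ciInf fun k => round_le z k)

/-- The quantity `q·|q|_p·⟨qu⟩`. -/
noncomputable def mixedProduct (p : ℕ) (u : ℝ) (q : ℕ) : ℝ :=
  (q : ℝ) * (padicNorm p (q : ℚ) : ℝ) * nearestIntDist ((q : ℝ) * u)

theorem mixedProduct_nonneg {p : ℕ} (u : ℝ) (q : ℕ) : 0 ≤ mixedProduct p u q :=
  mul_nonneg (mul_nonneg q.cast_nonneg (Rat.cast_nonneg.2 (padicNorm.nonneg _))) (nearestIntDist_nonneg _)

variable {p : ℕ} [Fact p.Prime]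

theorem UniformlyBadlyApproximable.isCompact_closure {u : ℝ}
    (h : UniformlyBadlyApproximable p u) :
    IsCompact (closure (coneOrbitP' p (xuvP p u 0))) := by
  obtain ⟨c, hc, h⟩ := h
  obtain ⟨N, hN⟩ := exists_nat_ge (2 / c)
  refine (isCompact_closure_iff_exists_box _).2 ⟨N, fun y hy => ?_⟩
  obtain ⟨s, hs, m, rfl⟩ := (mem_coneOrbitP'_iff u y).1 hy
  obtain ⟨a, b, a', b', hdet, h1, h2, h3, h4⟩ := exists_int_matrix_bounded hc hs (h m)
  have hN0 : (0 : ℝ) ≤ N := N.cast_nonneg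
  let γ : SL(2, ZInvP p) := SpecialLinearGroup.map (algebraMap ℤ (ZInvP p))
    ⟨!![a, a'; b, b'], by rw [Matrix.det_fin_two_of, hdet]⟩
  refine ⟨(shearScale s (p ^ (2 * m) * u) (by positivity), 1) * iotaP p γ, ⟨?_, ?_⟩,
    QuotientGroup.mk_mul_of_mem _ ⟨γ, rfl⟩⟩
  · intro i j
    have hγ : (((shearScale s (p ^ (2 * m) * u) (by positivity), 1) * iotaP p γ).1 :
        Matrix (Fin 2) (Fin 2) ℝ) = !![s⁻¹ * a, s⁻¹ * a';
          s * (p ^ (2 * m) * u * a + b), s * (p ^ (2 * m) * u * a' + b')] := by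
      change !![s⁻¹, 0; s * (p ^ (2 * m) * u), s] *
        ((!![a, a'; b, b']).map (algebraMap ℤ (ZInvP p))).map (zInvPToR p) = _
      ext i j
      fin_cases i <;> fin_cases j <;>
        simp [-algebraMap_int_eq, Matrix.mul_apply, Fin.sum_univ_two] <;> ring
    rw [hγ]
    fin_cases i <;> fin_cases j <;> simp only [Matrix.of_apply, Matrix.cons_val, Real.norm_eq_abs,
      Fin.zero_eta, Fin.mk_one] <;> linarith
  · intro i j
    have hγ : (((shearScale s (p ^ (2 * m) * u) (by positivity), 1) * iotaP p γ).2 :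
        Matrix (Fin 2) (Fin 2) ℚ_[p]) = (!![a, a'; b, b']).map (Int.cast : ℤ → ℚ_[p]) := by
      change 1 * ((!![a, a'; b, b']).map (algebraMap ℤ (ZInvP p))).map (zInvPToQp p) = _
      ext i j
      simp [-algebraMap_int_eq]
    rw [hγ]
    exact (Padic.norm_int_le_one _).trans (by linarith)

theorem uniformlyBadlyApproximable_of_isCompact_closure {u : ℝ}
    (h : IsCompact (closure (coneOrbitP' p (xuvP p u 0)))) :
    UniformlyBadlyApproximable p u := by
  obtain ⟨N, hN⟩ := (isCompact_closure_iff_exists_box _).1 h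
  set R : ℝ := N + 1 with hR
  have hR1 : 1 ≤ R := by simp [hR]
  set η : ℝ := 1 / (2 * R ^ 2) with hη
  have hη0 : 0 < η := by positivity
  have hη1 : η ≤ 1 := by
    rw [hη, div_le_one (by positivity)]
    nlinarith
  refine ⟨η ^ 2 / 2, by positivity, fun m a b ha => ?_⟩
  by_contra! hlt
  have haR : (1 : ℝ) ≤ a := by exact_mod_cast ha
  have hs : 1 ≤ a / η := by
    rw [one_le_div hη0]; linarith
  obtain ⟨l, hl, hlmk⟩ := hN _ ((mem_coneOrbitP'_iff u _).2 ⟨a / η, hs, m, rfl⟩)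
  obtain ⟨γ, hγ⟩ := QuotientGroup.eq.1 hlmk
  have hinv := inv_mem_closedBox hl
  have hw : ∀ i, (γ : Matrix (Fin 2) (Fin 2) (ZInvP p)) i 0 * algebraMap ℤ (ZInvP p) a +
      (γ : Matrix (Fin 2) (Fin 2) (ZInvP p)) i 1 * algebraMap ℤ (ZInvP p) b = 0 := by
    intro i
    by_contra hne
    have hprod := one_le_abs_mul_norm hne
    have hreal : ∀ j, zInvPToR p ((γ : Matrix (Fin 2) (Fin 2) (ZInvP p)) i j) =
        (((l⁻¹).1 : Matrix (Fin 2) (Fin 2) ℝ) *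
          !![(a / η)⁻¹, 0; a / η * (p ^ (2 * m) * u), a / η]) i j := fun j =>
      congrArg (fun g : GP p => (g.1 : Matrix (Fin 2) (Fin 2) ℝ) i j) hγ
    have hpadic : ∀ j, zInvPToQp p ((γ : Matrix (Fin 2) (Fin 2) (ZInvP p)) i j) =
        ((l⁻¹).2 : Matrix (Fin 2) (Fin 2) ℚ_[p]) i j := fun j => by
      have h : (iotaP p γ).2 = (l⁻¹).2 * 1 := congrArg Prod.snd hγ
      rw [mul_one] at h
      exact congrArg (fun g : SL(2, ℚ_[p]) => (g : Matrix (Fin 2) (Fin 2) ℚ_[p]) i j) h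
    simp only [map_add, map_mul, hreal, hpadic, zInvPToR_algebraMap,
      zInvPToQp_algebraMap] at hprod
    have h1 : |(((l⁻¹).1 : Matrix (Fin 2) (Fin 2) ℝ) *
          !![(a / η)⁻¹, 0; a / η * (p ^ (2 * m) * u), a / η]) i 0 * ((a : ℤ) : ℝ) +
        (((l⁻¹).1 : Matrix (Fin 2) (Fin 2) ℝ) *
          !![(a / η)⁻¹, 0; a / η * (p ^ (2 * m) * u), a / η]) i 1 * (b : ℝ)| ≤
        R * (3 / 2 * η) := by
      have hdist : |a / η * ((p : ℝ) ^ (2 * m) * u * a + b)| ≤ η / 2 := by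
        rw [abs_mul, abs_of_pos (by positivity), div_mul_eq_mul_div, div_le_iff₀ hη0]
        linarith
      have e0 := hinv.1 i 0
      have e1 := hinv.1 i 1
      rw [Real.norm_eq_abs] at e0 e1
      calc _ = |((l⁻¹).1 : Matrix (Fin 2) (Fin 2) ℝ) i 0 * η +
            ((l⁻¹).1 : Matrix (Fin 2) (Fin 2) ℝ) i 1 *
              (a / η * ((p : ℝ) ^ (2 * m) * u * a + b))| := by
            congr 1
            simp only [Matrix.mul_apply, Fin.sum_univ_two, Matrix.of_apply, Matrix.cons_val,
              Int.cast_natCast]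
            field_simp
            ring
        _ ≤ R * η + R * (η / 2) := by
            refine (abs_add_le _ _).trans ?_
            rw [abs_mul, abs_mul, abs_of_pos hη0]
            gcongr
        _ = _ := by ring
    have h2 : ‖((l⁻¹).2 : Matrix (Fin 2) (Fin 2) ℚ_[p]) i 0 * ((a : ℤ) : ℚ_[p]) +
        ((l⁻¹).2 : Matrix (Fin 2) (Fin 2) ℚ_[p]) i 1 * (b : ℚ_[p])‖ ≤ R := by
      refine (Padic.nonarchimedean _ _).trans (max_le ?_ ?_) <;> rw [norm_mul]
      · exact (mul_le_of_le_one_right (norm_nonneg _) (Padic.norm_int_le_one _)).trans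
          (hinv.2 i 0)
      · exact (mul_le_of_le_one_right (norm_nonneg _) (Padic.norm_int_le_one _)).trans
          (hinv.2 i 1)
    have h3 := hprod.trans (mul_le_mul h1 h2 (norm_nonneg _) (by positivity))
    have h4 : R * (3 / 2 * η) * R = 3 / 4 := by
      rw [hη]
      field_simp
      norm_num
    linarith
  have hdet := γ.2
  rw [Matrix.det_fin_two] at hdet
  have hzero : algebraMap ℤ (ZInvP p) a = 0 := by
    linear_combination (γ : Matrix (Fin 2) (Fin 2) (ZInvP p)) 1 1 * hw 0 -
      (γ : Matrix (Fin 2) (Fin 2) (ZInvP p)) 0 1 * hw 1 - algebraMap ℤ (ZInvP p) a * hdet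
  have := congrArg (zInvPToR p) hzero
  rw [zInvPToR_algebraMap, map_zero, Int.cast_natCast] at this
  linarith

theorem isCompact_closure_coneOrbit_iff (u : ℝ) :
    IsCompact (closure (coneOrbitP' p (xuvP p u 0))) ↔ UniformlyBadlyApproximable p u :=
  ⟨uniformlyBadlyApproximable_of_isCompact_closure,
    UniformlyBadlyApproximable.isCompact_closure⟩

theorem padicNorm_natCast_le_one (q : ℕ) : (padicNorm p (q : ℚ) : ℝ) ≤ 1 := by
  exact_mod_cast padicNorm.of_nat (p := p) q

/-- The mixed product at `p^{2m}a` is at most `a|p^{2m}ua + b|`. -/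
theorem mixedProduct_pow_mul_le (u : ℝ) (m a : ℕ) (b : ℤ) :
    mixedProduct p u (p ^ (2 * m) * a) ≤ a * |(p : ℝ) ^ (2 * m) * u * a + b| := by
  have hp : (p : ℝ) ≠ 0 := Nat.cast_ne_zero.2 (Fact.out : p.Prime).ne_zero
  have h1 : ((p ^ (2 * m) * a : ℕ) : ℝ) * (padicNorm p ((p ^ (2 * m) * a : ℕ) : ℚ) : ℝ) ≤ a := by
    have : padicNorm p ((p ^ (2 * m) * a : ℕ) : ℚ) = ((p : ℚ) ^ (2 * m))⁻¹ * padicNorm p a := by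
      push_cast
      rw [padicNorm.mul, IsAbsoluteValue.abv_pow (padicNorm p), padicNorm.padicNorm_p_of_prime, inv_pow]
    rw [this]
    push_cast
    calc _ = (a : ℝ) * (padicNorm p (a : ℚ) : ℝ) := by field_simp
      _ ≤ a := mul_le_of_le_one_right a.cast_nonneg (padicNorm_natCast_le_one a)
  refine mul_le_mul h1 ((nearestIntDist_le _ (-b)).trans_eq ?_) (nearestIntDist_nonneg _)
    a.cast_nonneg
  push_cast
  congr 1
  ring

/-- Conversely every mixed product is, up to a factor `p`, of the form `a|p^{2m}ua + b|`. -/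
theorem exists_le_mul_mixedProduct (u : ℝ) {q : ℕ} (hq : 0 < q) :
    ∃ (m a : ℕ) (b : ℤ), 0 < a ∧
      a * |(p : ℝ) ^ (2 * m) * u * a + b| ≤ p * mixedProduct p u q := by
  have hpp : p.Prime := Fact.out
  have hp : (1 : ℝ) ≤ p := by exact_mod_cast hpp.one_le
  set v := padicValNat p q with hv
  obtain ⟨a, ha⟩ : p ^ (2 * (v / 2)) ∣ q :=
    (pow_dvd_pow p (Nat.mul_div_le v 2)).trans pow_padicValNat_dvd
  have ha0 : 0 < a := Nat.pos_of_ne_zero (by rintro rfl; simp at ha; omega)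
  refine ⟨v / 2, a, -round ((q : ℝ) * u), ha0, ?_⟩
  have hnorm : (padicNorm p (q : ℚ) : ℝ) = ((p : ℝ) ^ v)⁻¹ := by
    rw [padicNorm.eq_zpow_of_nonzero (by exact_mod_cast hq.ne'), padicValRat.of_nat, ← hv]
    push_cast
    rw [_root_.zpow_neg, zpow_natCast]
  have hqa : (q : ℝ) = (p : ℝ) ^ (2 * (v / 2)) * a := by exact_mod_cast ha
  have hpow : (p : ℝ) ^ v ≤ p * (p : ℝ) ^ (2 * (v / 2)) := by
    rw [← _root_.pow_succ']
    exact pow_le_pow_right₀ hp (by omega)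
  have h1 : (a : ℝ) ≤ p * (q * (padicNorm p (q : ℚ) : ℝ)) := by
    rw [hnorm, ← mul_assoc, ← div_eq_mul_inv, le_div_iff₀ (by positivity)]
    calc (a : ℝ) * p ^ v ≤ a * (p * (p : ℝ) ^ (2 * (v / 2))) := by gcongr
      _ = p * q := by rw [hqa]; ring
  rw [mixedProduct, nearestIntDist_eq_abs_sub_round, ← mul_assoc]
  refine (mul_le_mul_of_nonneg_right h1 (abs_nonneg _)).trans_eq ?_
  congr 2
  rw [hqa]
  push_cast
  ring

/-- The mixed products have a positive lower bound over all `q ≥ 1` exactly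
when `u` is uniformly badly approximable. -/
theorem uniformlyBadlyApproximable_iff_mixedProduct (u : ℝ) :
    UniformlyBadlyApproximable p u ↔ ∃ c : ℝ, 0 < c ∧ ∀ q : ℕ, 0 < q → c ≤ mixedProduct p u q := by
  have hp : 0 < p := (Fact.out : p.Prime).pos
  have hpR : (0 : ℝ) < p := Nat.cast_pos.2 hp
  constructor
  · rintro ⟨c, hc, h⟩
    refine ⟨c / p, by positivity, fun q hq => ?_⟩
    obtain ⟨m, a, b, ha, hle⟩ := exists_le_mul_mixedProduct (p := p) u hq
    rw [div_le_iff₀' hpR]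
    exact (h m a b ha).trans hle
  · rintro ⟨c, hc, h⟩
    exact ⟨c, hc, fun m a b ha =>
      (h _ (by positivity)).trans (mixedProduct_pow_mul_le u m a b)⟩

theorem mixedProduct_mul_eq_zero {u : ℝ} {q : ℕ} (hq : 0 < q) (h : mixedProduct p u q = 0)
    (k : ℕ) : mixedProduct p u (k * q) = 0 := by
  have hn : nearestIntDist ((q : ℝ) * u) = 0 := by
    have h1 : (padicNorm p (q : ℚ) : ℝ) ≠ 0 := by
      exact_mod_cast padicNorm.nonzero (by exact_mod_cast hq.ne')
    have h2 : (q : ℝ) ≠ 0 := by exact_mod_cast hq.ne'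
    simpa [mixedProduct, h1, h2] using h
  rw [nearestIntDist_eq_abs_sub_round, abs_eq_zero, sub_eq_zero] at hn
  have hk : nearestIntDist (((k * q : ℕ) : ℝ) * u) = 0 := by
    refine le_antisymm ((nearestIntDist_le _ (k * round ((q : ℝ) * u))).trans_eq ?_)
      (nearestIntDist_nonneg _)
    push_cast
    rw [← hn]
    simp [mul_assoc]
  rw [mixedProduct, hk, mul_zero]

/-- A positive eventual lower bound for the mixed products is a positive bound for all `q ≥ 1`. -/
theorem exists_pos_le_mixedProduct_of_eventually {u c : ℝ} (hc : 0 < c)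
    (h : ∀ᶠ q in Filter.atTop, c ≤ mixedProduct p u q) :
    ∃ c : ℝ, 0 < c ∧ ∀ q : ℕ, 0 < q → c ≤ mixedProduct p u q := by
  obtain ⟨Q, hQ⟩ := Filter.eventually_atTop.1 h
  have hpos : ∀ q : ℕ, 0 < q → 0 < mixedProduct p u q := fun q hq =>
    (mixedProduct_nonneg u q).lt_of_ne fun h0 => by
      have := hQ (Q * q) (Nat.le_mul_of_pos_right Q hq)
      rw [mixedProduct_mul_eq_zero hq h0.symm] at this
      linarith
  rcases (Finset.Icc 1 Q).eq_empty_or_nonempty with he | hne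
  · refine ⟨c, hc, fun q hq => hQ q ?_⟩
    rw [Finset.Icc_eq_empty_iff] at he
    omega
  · obtain ⟨q₀, hq₀, hmin⟩ := Finset.exists_min_image _ (mixedProduct p u) hne
    refine ⟨min c (mixedProduct p u q₀), lt_min hc (hpos _ (Finset.mem_Icc.1 hq₀).1),
      fun q hq => ?_⟩
    rcases le_total q Q with hqQ | hqQ
    · exact (min_le_right _ _).trans (hmin q (Finset.mem_Icc.2 ⟨hq, hqQ⟩))
    · exact (min_le_left _ _).trans (hQ q hqQ)

/-- If the mixed products are bounded below, Dirichlet's theorem makes them at most one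
infinitely often. -/
theorem frequently_mixedProduct_le_one {u c : ℝ} (hc : 0 < c)
    (h : ∀ q : ℕ, 0 < q → c ≤ mixedProduct p u q) :
    ∃ᶠ q in Filter.atTop, mixedProduct p u q ≤ 1 := by
  refine Filter.frequently_atTop.2 fun Q => ?_
  obtain ⟨n, hn⟩ := exists_nat_ge (Q / c)
  obtain ⟨k, hk0, hkn, hk⟩ := Real.exists_nat_abs_mul_sub_round_le u n.succ_pos
  rw [← nearestIntDist_eq_abs_sub_round] at hk
  have hkn' : (k : ℝ) ≤ n + 1 := by exact_mod_cast hkn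
  have hle : mixedProduct p u k ≤ k * (1 / ((n.succ : ℝ) + 1)) :=
    mul_le_mul (mul_le_of_le_one_right k.cast_nonneg (padicNorm_natCast_le_one k)) hk
      (nearestIntDist_nonneg _) k.cast_nonneg
  have hck := (h k hk0).trans hle
  push_cast at hle hck
  rw [mul_one_div] at hle hck
  refine ⟨k, ?_, hle.trans ?_⟩
  · rw [le_div_iff₀ (by positivity)] at hck
    rw [div_le_iff₀ hc] at hn
    have : (Q : ℝ) ≤ k := by nlinarith
    exact_mod_cast this
  · rw [div_le_one (by positivity)]
    linarith

theorem liminf_mixedProduct_eq_zero_iff (u : ℝ) :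
    Filter.liminf (mixedProduct p u) Filter.atTop = 0 ↔ ¬ UniformlyBadlyApproximable p u := by
  rw [uniformlyBadlyApproximable_iff_mixedProduct, Filter.liminf_eq]
  constructor
  · rintro h0 ⟨c, hc, h⟩
    have hbdd : BddAbove {a | ∀ᶠ q in Filter.atTop, a ≤ mixedProduct p u q} := by
      refine ⟨1, fun a ha => ?_⟩
      obtain ⟨q, hq1, hq2⟩ := ((frequently_mixedProduct_le_one hc h).and_eventually ha).exists
      exact hq2.trans hq1
    have := le_csSup hbdd (show c ∈ {a | ∀ᶠ q in Filter.atTop, a ≤ mixedProduct p u q} from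
      Filter.eventually_atTop.2 ⟨1, fun q hq => h q hq⟩)
    linarith
  · intro h
    refine IsGreatest.csSup_eq ⟨Filter.Eventually.of_forall (mixedProduct_nonneg u),
      fun a ha => ?_⟩
    by_contra! hpos
    exact h (exists_pos_le_mixedProduct_of_eventually hpos ha)

end Diophantine

/-- For `u ≠ 0`, `liminf_{q → ∞} q·|q|_p·⟨qu⟩ = 0` (over positive integers `q`) holds
if and only if the orbit `α^{C'} x_{u,0}` does not have compact closure in `X`. -/
theorem dMT_iff_coneOrbit_unbounded (p : ℕ) [Fact p.Prime] (u : ℝ) (hu : u ≠ 0) :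
    Filter.liminf
        (fun q : ℕ => (q : ℝ) * (padicNorm p (q : ℚ) : ℝ) * nearestIntDist ((q : ℝ) * u))
        Filter.atTop = 0 ↔
      ¬ IsCompact (closure (coneOrbitP' p (xuvP p u 0))) := by
  rw [isCompact_closure_coneOrbit_iff]
  exact liminf_mixedProduct_eq_zero_iff u
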